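/- Let a, b, c ∈ ℍ, not all zero, and suppose |a|, |b|, |c| do not form a triangle, i.e. max{|a|,|b|,|c|} is at least the sum of the other two. Set M = max{|a|,|b|,|c|}. Then the two-variable quaternionic Mahler measure satisfies m_ℍ(ax + by + c) = log M + (|a|² + |b|² + |c|²)/(4M²) − 1/4. -/

import Mathlib

open MeasureTheory Quaternion

noncomputable instance : MeasurableSpace (Quaternion ℝ) := borel _
instance : BorelSpace (Quaternion ℝ) := ⟨rfl⟩
instance : Nonempty (Metric.sphere (0 : Quaternion ℝ) 1) := ⟨⟨1, by simp⟩⟩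

/-- The probability Haar measure `μ` on the group `T¹(ℍ)` of unit quaternions
(the Haar measure normalized so that the whole group has measure `1`). -/
noncomputable def muH : Measure (Metric.sphere (0 : Quaternion ℝ) 1) :=
  Measure.haarMeasure ⊤

/-- The quaternionic Mahler measure `m_ℍ(f) = ∫_{T¹(ℍ)} log |f(q)| dμ(q)`. -/
noncomputable def mahlerH (f : Quaternion ℝ → Quaternion ℝ) : ℝ :=
  ∫ q : Metric.sphere (0 : Quaternion ℝ) 1, Real.log ‖f q‖ ∂muH
/-- The two-variable quaternionic Mahler measure
`m_ℍ(f) = ∫_{T¹(ℍ)×T¹(ℍ)} log |f(x,y)| d(μ⊗μ)(x,y)`. -/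
noncomputable def mahlerH2 (f : Quaternion ℝ → Quaternion ℝ → Quaternion ℝ) : ℝ :=
  ∫ p : (Metric.sphere (0 : Quaternion ℝ) 1) × (Metric.sphere (0 : Quaternion ℝ) 1),
    Real.log ‖f p.1 p.2‖ ∂(muH.prod muH)

open Set in
/-- Differentiation under the integral sign over a compact space. -/
lemma hasDerivAt_integral_of_compactSpace {X : Type*} [TopologicalSpace X] [CompactSpace X]
    [MeasurableSpace X] [OpensMeasurableSpace X] (μ : Measure X) [IsFiniteMeasure μ]
    {F F' : ℝ → X → ℝ} {s : Set ℝ} (hs : IsOpen s) {r₀ : ℝ} (hr₀ : r₀ ∈ s)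
    (hF : ∀ r ∈ s, Continuous (F r))
    (hF' : ContinuousOn (Function.uncurry F') (s ×ˢ univ))
    (hd : ∀ r ∈ s, ∀ x, HasDerivAt (fun r => F r x) (F' r x) r) :
    HasDerivAt (fun r => ∫ x, F r x ∂μ) (∫ x, F' r₀ x ∂μ) r₀ := by
  obtain ⟨ε, hε, hball⟩ := Metric.nhds_basis_closedBall.mem_iff.1 (hs.mem_nhds hr₀)
  have hcont : ContinuousOn (Function.uncurry F') (Metric.closedBall r₀ ε ×ˢ univ) :=
    hF'.mono (prod_mono hball le_rfl)
  obtain ⟨C, hC⟩ := ((isCompact_closedBall r₀ ε).prod isCompact_univ).exists_bound_of_continuousOn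
    hcont
  have hF'₀ : Continuous (F' r₀) :=
    hF'.comp_continuous (f := fun x => (r₀, x)) (by fun_prop) (fun x => ⟨hr₀, mem_univ x⟩)
  refine (hasDerivAt_integral_of_dominated_loc_of_deriv_le (bound := fun _ => C)
    (Metric.closedBall_mem_nhds r₀ hε) ?_ ?_ hF'₀.aestronglyMeasurable ?_ (integrable_const C) ?_).2
  · filter_upwards [hs.mem_nhds hr₀] with r hr using (hF r hr).aestronglyMeasurable
  · exact (hF r₀ hr₀).integrable_of_hasCompactSupport (HasCompactSupport.of_compactSpace _)
  · exact .of_forall fun x r hr => hC (r, x) ⟨hr, mem_univ x⟩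
  · exact .of_forall fun x r hr => hd r (hball hr) x

instance : IsProbabilityMeasure muH := ⟨Measure.haarMeasure_self⟩

instance : muH.IsMulLeftInvariant := by unfold muH; infer_instance

namespace Quaternion

/-- The real part of a unit quaternion. -/
def sphereRe (x : Metric.sphere (0 : ℍ) 1) : ℝ := (x : ℍ).re

@[fun_prop]
lemma continuous_sphereRe : Continuous sphereRe :=
  continuous_re.comp continuous_subtype_val

lemma integrable_muH {f : Metric.sphere (0 : ℍ) 1 → ℝ} (hf : Continuous f) :
    Integrable f muH :=
  hf.integrable_of_hasCompactSupport (HasCompactSupport.of_compactSpace _)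

lemma norm_eq_one_iff_sum_sq (q : ℍ) :
    ‖q‖ = 1 ↔ q.re ^ 2 + q.imI ^ 2 + q.imJ ^ 2 + q.imK ^ 2 = 1 := by
  rw [← normSq_def', normSq_eq_norm_mul_self, ← sq, pow_eq_one_iff_of_nonneg (norm_nonneg q) two_ne_zero]

lemma sum_sq_of_mem_sphere (x : Metric.sphere (0 : ℍ) 1) :
    (x : ℍ).re ^ 2 + (x : ℍ).imI ^ 2 + (x : ℍ).imJ ^ 2 + (x : ℍ).imK ^ 2 = 1 :=
  (norm_eq_one_iff_sum_sq _).1 (norm_eq_of_mem_sphere x)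

lemma exists_sphere_of_sum_sq (a b c d : ℝ) (h : a ^ 2 + b ^ 2 + c ^ 2 + d ^ 2 = 1) :
    ∃ q : Metric.sphere (0 : ℍ) 1,
      (q : ℍ).re = a ∧ (q : ℍ).imI = b ∧ (q : ℍ).imJ = c ∧ (q : ℍ).imK = d :=
  ⟨⟨⟨a, b, c, d⟩, mem_sphere_zero_iff_norm.2 ((norm_eq_one_iff_sum_sq _).2 h)⟩, rfl, rfl, rfl, rfl⟩

lemma sphereRe_sq_le_one (x : Metric.sphere (0 : ℍ) 1) : sphereRe x ^ 2 ≤ 1 := by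
  unfold sphereRe
  nlinarith [sum_sq_of_mem_sphere x, sq_nonneg (x : ℍ).imI, sq_nonneg (x : ℍ).imJ,
    sq_nonneg (x : ℍ).imK]

lemma one_add_two_mul_add_sq_pos {r t : ℝ} (hr : r ∈ Set.Ioo (-1 : ℝ) 1) (ht : t ^ 2 ≤ 1) :
    0 < 1 + 2 * r * t + r ^ 2 := by
  have hr' : r ^ 2 < 1 := by nlinarith [hr.1, hr.2]
  by_contra! h
  have h1 : (r + t) ^ 2 = 0 := by nlinarith [sq_nonneg (r + t)]
  have h2 : r = -t := by nlinarith [pow_eq_zero_iff (two_ne_zero) |>.1 h1]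
  subst h2
  nlinarith

/-- Left multiplication by `cos θ + v sin θ`, for a square root `v` of `-1`, preserves `muH`;
this is its infinitesimal form. -/
lemma integral_rotation_deriv (r : ℝ) (hr : r ∈ Set.Ioo (-1 : ℝ) 1) (v : Metric.sphere (0 : ℍ) 1)
    (hv : (v : ℍ) * v = -1) (hv0 : (v : ℍ).re = 0) :
    ∫ x, (sphereRe x / (1 + 2 * r * sphereRe x + r ^ 2) +
        2 * r * sphereRe (v * x) ^ 2 / (1 + 2 * r * sphereRe x + r ^ 2) ^ 2) ∂muH = 0 := by
  set P : ℝ → Metric.sphere (0 : ℍ) 1 → ℝ :=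
    fun θ x => Real.cos θ * sphereRe x + Real.sin θ * sphereRe (v * x) with hP
  set W : ℝ → Metric.sphere (0 : ℍ) 1 → ℝ :=
    fun θ x => Real.cos θ * sphereRe (v * x) - Real.sin θ * sphereRe x with hW
  have hmem (θ : ℝ) : Real.cos θ • (1 : ℍ) + Real.sin θ • (v : ℍ) ∈ Metric.sphere (0 : ℍ) 1 := by
    have h1 := sum_sq_of_mem_sphere v
    rw [hv0] at h1
    rw [mem_sphere_zero_iff_norm, norm_eq_one_iff_sum_sq]
    simp only [re_add, imI_add, imJ_add, imK_add, re_smul, imI_smul, imJ_smul, imK_smul, re_one,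
      imI_one, imJ_one, imK_one, hv0, smul_eq_mul]
    linear_combination Real.sin_sq_add_cos_sq θ + Real.sin θ ^ 2 * h1
  set e : ℝ → Metric.sphere (0 : ℍ) 1 := fun θ => ⟨_, hmem θ⟩
  have hPe (θ : ℝ) (x) : P θ x = sphereRe (e θ * x) := by
    simp only [e, hP, sphereRe, Metric.unitSphere.coe_mul, add_mul, smul_mul_assoc, one_mul,
      re_add, re_smul, smul_eq_mul]
  have hWe (θ : ℝ) (x) : W θ x = sphereRe (v * (e θ * x)) := by
    simp only [e, hW, sphereRe, Metric.unitSphere.coe_mul, add_mul, mul_add, smul_mul_assoc,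
      mul_smul_comm, one_mul, ← mul_assoc (v : ℍ) v, hv, neg_mul, smul_neg,
      re_add, re_neg, re_smul, smul_eq_mul, sub_eq_add_neg]
  have hpos (θ : ℝ) (x) : 0 < 1 + 2 * r * P θ x + r ^ 2 := by
    rw [hPe]; exact one_add_two_mul_add_sq_pos hr (sphereRe_sq_le_one _)
  have hPc : Continuous (Function.uncurry P) := by
    simp only [hP, Function.uncurry_def]; fun_prop
  have hWc : Continuous (Function.uncurry W) := by
    simp only [hW, Function.uncurry_def]; fun_prop
  have key := hasDerivAt_integral_of_compactSpace muH (s := Set.univ) (r₀ := 0) isOpen_univ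
    (Set.mem_univ _)
    (F := fun θ x => W θ x / (1 + 2 * r * P θ x + r ^ 2))
    (F' := fun θ x => (-P θ x * (1 + 2 * r * P θ x + r ^ 2) - W θ x * (2 * r * W θ x)) /
      (1 + 2 * r * P θ x + r ^ 2) ^ 2) ?_ ?_ ?_
  · have hconst : (fun θ => ∫ x, W θ x / (1 + 2 * r * P θ x + r ^ 2) ∂muH) =
        fun _ => ∫ x, sphereRe (v * x) / (1 + 2 * r * sphereRe x + r ^ 2) ∂muH := by
      funext θ
      simp only [hPe, hWe]
      exact integral_mul_left_eq_self (μ := muH) (fun x : Metric.sphere (0 : ℍ) 1 =>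
          sphereRe (v * x) / (1 + 2 * r * sphereRe x + r ^ 2)) (e θ)
    rw [hconst] at key
    have h0 := key.unique (hasDerivAt_const _ _)
    rw [← neg_eq_zero, ← integral_neg, ← h0]
    congr 1
    funext x
    have hx := (hpos 0 x).ne'
    simp only [hP, hW, Real.cos_zero, Real.sin_zero] at hx ⊢
    simp only [one_mul, zero_mul, add_zero, sub_zero] at hx ⊢
    field_simp
    ring
  · intro θ _
    have h1 : Continuous (P θ) := hPc.comp (f := fun x => (θ, x)) (by fun_prop)
    have h2 : Continuous (W θ) := hWc.comp (f := fun x => (θ, x)) (by fun_prop)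
    exact h2.div (by fun_prop) fun x => (hpos θ x).ne'
  · refine Continuous.continuousOn ?_
    change Continuous fun p : ℝ × Metric.sphere (0 : ℍ) 1 =>
      (-Function.uncurry P p * (1 + 2 * r * Function.uncurry P p + r ^ 2) -
        Function.uncurry W p * (2 * r * Function.uncurry W p)) /
      (1 + 2 * r * Function.uncurry P p + r ^ 2) ^ 2
    exact Continuous.div (by fun_prop) (by fun_prop) fun p => (pow_pos (hpos p.1 p.2) 2).ne'
  · intro θ _ x
    have hdP : HasDerivAt (fun θ => P θ x) (W θ x) θ :=
      (((Real.hasDerivAt_cos θ).mul_const (sphereRe x)).add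
        ((Real.hasDerivAt_sin θ).mul_const (sphereRe (v * x)))).congr_deriv (by simp only [hW]; ring)
    have hdW : HasDerivAt (fun θ => W θ x) (-P θ x) θ :=
      (((Real.hasDerivAt_cos θ).mul_const (sphereRe (v * x))).sub
        ((Real.hasDerivAt_sin θ).mul_const (sphereRe x))).congr_deriv (by simp only [hP]; ring)
    exact hdW.div (((hdP.const_mul (2 * r)).const_add 1).add_const (r ^ 2)) (hpos θ x).ne'

lemma integral_laplacian_identity (r : ℝ) (hr : r ∈ Set.Ioo (-1 : ℝ) 1) :
    ∫ x, (3 * sphereRe x / (1 + 2 * r * sphereRe x + r ^ 2) +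
        2 * r * (1 - sphereRe x ^ 2) / (1 + 2 * r * sphereRe x + r ^ 2) ^ 2) ∂muH = 0 := by
  obtain ⟨i, hi₀, hi₁, hi₂, hi₃⟩ := exists_sphere_of_sum_sq 0 1 0 0 (by norm_num)
  obtain ⟨j, hj₀, hj₁, hj₂, hj₃⟩ := exists_sphere_of_sum_sq 0 0 1 0 (by norm_num)
  obtain ⟨k, hk₀, hk₁, hk₂, hk₃⟩ := exists_sphere_of_sum_sq 0 0 0 1 (by norm_num)
  have hIi := integral_rotation_deriv r hr i
    (by ext <;> simp [re_mul, imI_mul, imJ_mul, imK_mul, hi₀, hi₁, hi₂, hi₃]) hi₀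
  have hIj := integral_rotation_deriv r hr j
    (by ext <;> simp [re_mul, imI_mul, imJ_mul, imK_mul, hj₀, hj₁, hj₂, hj₃]) hj₀
  have hIk := integral_rotation_deriv r hr k
    (by ext <;> simp [re_mul, imI_mul, imJ_mul, imK_mul, hk₀, hk₁, hk₂, hk₃]) hk₀
  have hint (v : Metric.sphere (0 : ℍ) 1) : Integrable (fun x =>
      sphereRe x / (1 + 2 * r * sphereRe x + r ^ 2) +
        2 * r * sphereRe (v * x) ^ 2 / (1 + 2 * r * sphereRe x + r ^ 2) ^ 2) muH := by
    have hpos (x) := one_add_two_mul_add_sq_pos hr (sphereRe_sq_le_one x)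
    exact integrable_muH ((continuous_sphereRe.div (by fun_prop) fun x => (hpos x).ne').add
      (Continuous.div (by fun_prop) (by fun_prop) fun x => (pow_pos (hpos x) 2).ne'))
  have h := integral_add ((hint i).add (hint j)) (hint k)
  rw [integral_add' (hint i) (hint j), hIi, hIj, hIk, add_zero, add_zero] at h
  rw [← h]
  congr 1
  funext x
  have hx : 1 - sphereRe x ^ 2 =
      sphereRe (i * x) ^ 2 + sphereRe (j * x) ^ 2 + sphereRe (k * x) ^ 2 := by
    simp only [sphereRe, Metric.unitSphere.coe_mul, re_mul, hi₀, hi₁, hi₂, hi₃, hj₀, hj₁, hj₂, hj₃,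
      hk₀, hk₁, hk₂, hk₃]
    linear_combination -sum_sq_of_mem_sphere x
  simp only [Pi.add_apply, hx]
  ring

lemma continuous_inv_sphereRe {r : ℝ} (hr : r ∈ Set.Ioo (-1 : ℝ) 1) :
    Continuous fun x => (1 + 2 * r * sphereRe x + r ^ 2)⁻¹ :=
  Continuous.inv₀ (by fun_prop) fun x =>
    (one_add_two_mul_add_sq_pos hr (sphereRe_sq_le_one x)).ne'

open Set in
lemma continuousOn_sphereRe_div (n : ℕ) : ContinuousOn
    (fun p : ℝ × Metric.sphere (0 : ℍ) 1 =>
      (2 * sphereRe p.2 + 2 * p.1) / (1 + 2 * p.1 * sphereRe p.2 + p.1 ^ 2) ^ n)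
    (Ioo (-1 : ℝ) 1 ×ˢ univ) :=
  ContinuousOn.div (by fun_prop) (by fun_prop) fun p hp =>
    (pow_pos (one_add_two_mul_add_sq_pos hp.1 (sphereRe_sq_le_one p.2)) n).ne'

lemma hasDerivAt_one_add_two_mul_add_sq (r t : ℝ) :
    HasDerivAt (fun r => 1 + 2 * r * t + r ^ 2) (2 * t + 2 * r) r := by
  have h := (((((hasDerivAt_id r).const_mul 2).mul_const t).const_add 1).add
    ((hasDerivAt_id r).pow 2))
  exact h.congr_deriv (by simp)

lemma hasDerivAt_integral_inv {r : ℝ} (hr : r ∈ Set.Ioo (-1 : ℝ) 1) :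
    HasDerivAt (fun r => ∫ x, (1 + 2 * r * sphereRe x + r ^ 2)⁻¹ ∂muH)
      (∫ x, -((2 * sphereRe x + 2 * r) / (1 + 2 * r * sphereRe x + r ^ 2) ^ 2) ∂muH) r := by
  refine hasDerivAt_integral_of_compactSpace muH
    (F' := fun r x => -((2 * sphereRe x + 2 * r) / (1 + 2 * r * sphereRe x + r ^ 2) ^ 2))
    isOpen_Ioo hr (fun r hr => continuous_inv_sphereRe hr) (continuousOn_sphereRe_div 2).neg
    fun r hr x => ?_
  exact ((hasDerivAt_one_add_two_mul_add_sq r (sphereRe x)).inv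
    (one_add_two_mul_add_sq_pos hr (sphereRe_sq_le_one x)).ne').congr_deriv (neg_div _ _)

/-- The Poisson-type integral: `|1 + r x|⁻²` has mean value `1` over the unit sphere. -/
lemma integral_inv_eq_one {r : ℝ} (hr : r ∈ Set.Ioo (-1 : ℝ) 1) :
    ∫ x, (1 + 2 * r * sphereRe x + r ^ 2)⁻¹ ∂muH = 1 := by
  set A : ℝ → ℝ := fun r => ∫ x, (1 + 2 * r * sphereRe x + r ^ 2)⁻¹ ∂muH with hA
  have key {r : ℝ} (hr : r ∈ Set.Ioo (-1 : ℝ) 1) :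
      HasDerivAt (fun r => (A r - 1) * (r ^ 2 / (1 - r ^ 2))) 0 r := by
    have hpos (x) := one_add_two_mul_add_sq_pos hr (sphereRe_sq_le_one x)
    have hr1 : 0 < 1 - r ^ 2 := by nlinarith [hr.1, hr.2]
    set B : ℝ := ∫ x, ((1 + 2 * r * sphereRe x + r ^ 2)⁻¹) ^ 2 ∂muH with hB
    have hi1 : Integrable (fun x => (1 + 2 * r * sphereRe x + r ^ 2)⁻¹) muH :=
      integrable_muH (continuous_inv_sphereRe hr)
    have hi2 : Integrable (fun x => ((1 + 2 * r * sphereRe x + r ^ 2)⁻¹) ^ 2) muH :=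
      integrable_muH ((continuous_inv_sphereRe hr).pow 2)
    have hB' : 2 - (1 + r ^ 2) * A r - (1 - r ^ 2) ^ 2 * B = 0 := by
      have h : ∫ x, (2 - (1 + r ^ 2) * (1 + 2 * r * sphereRe x + r ^ 2)⁻¹ -
          (1 - r ^ 2) ^ 2 * ((1 + 2 * r * sphereRe x + r ^ 2)⁻¹) ^ 2) ∂muH =
          2 - (1 + r ^ 2) * A r - (1 - r ^ 2) ^ 2 * B := by
        have hi0 : Integrable
            (fun x => 2 - (1 + r ^ 2) * (1 + 2 * r * sphereRe x + r ^ 2)⁻¹) muH :=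
          (integrable_const _).sub (hi1.const_mul _)
        rw [integral_sub hi0 (hi2.const_mul _),
          integral_sub (integrable_const _) (hi1.const_mul _), integral_const_mul,
          integral_const_mul]
        simp [hA, hB]
      rw [← h, ← mul_zero (2 * r), ← integral_laplacian_identity r hr, ← integral_const_mul]
      congr 1
      funext x
      have := (hpos x).ne'
      field_simp
      ring
    have hA' := hasDerivAt_integral_inv hr
    set D : ℝ := ∫ x, -((2 * sphereRe x + 2 * r) / (1 + 2 * r * sphereRe x + r ^ 2) ^ 2) ∂muH
      with hD
    have hrD : r * D = (1 - r ^ 2) * B - A r := by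
      rw [hA, hB, hD, ← integral_const_mul, ← integral_const_mul,
        ← integral_sub (hi2.const_mul _) hi1]
      congr 1
      funext x
      have := (hpos x).ne'
      field_simp
      ring
    have hsq : HasDerivAt (fun r : ℝ => r ^ 2) (2 * r) r := by simpa using hasDerivAt_pow 2 r
    refine ((hA'.sub_const 1).mul (hsq.div (hsq.const_sub 1) hr1.ne')).congr_deriv ?_
    change D * (r ^ 2 / (1 - r ^ 2)) + (A r - 1) * _ = 0
    field_simp
    linear_combination r * (1 - r ^ 2) * hrD - r * hB'
  have hconst := isOpen_Ioo.is_const_of_deriv_eq_zero isPreconnected_Ioo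
    (fun r hr => (key hr).differentiableAt.differentiableWithinAt) (fun r hr => (key hr).deriv)
    hr (show (0 : ℝ) ∈ Set.Ioo (-1 : ℝ) 1 by norm_num)
  have hr1 : 0 < 1 - r ^ 2 := by nlinarith [hr.1, hr.2]
  by_cases h0 : r = 0
  · simp [h0]
  · have : r ^ 2 / (1 - r ^ 2) ≠ 0 := by positivity
    have h := hconst
    simp only [ne_eq, OfNat.ofNat_ne_zero, not_false_eq_true, zero_pow, zero_div, mul_zero,
      mul_eq_zero, this, or_false] at h
    linarith

lemma integral_log_eq_of_lt_one {r : ℝ} (hr : r ∈ Set.Ioo (-1 : ℝ) 1) :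
    ∫ x, Real.log (1 + 2 * r * sphereRe x + r ^ 2) ∂muH = r ^ 2 / 2 := by
  have key {r : ℝ} (hr : r ∈ Set.Ioo (-1 : ℝ) 1) :
      HasDerivAt (fun r => ∫ x, Real.log (1 + 2 * r * sphereRe x + r ^ 2) ∂muH - r ^ 2 / 2) 0 r := by
    have hpos {r : ℝ} (hr : r ∈ Set.Ioo (-1 : ℝ) 1) (x) :=
      one_add_two_mul_add_sq_pos hr (sphereRe_sq_le_one x)
    have hL := hasDerivAt_integral_of_compactSpace muH
      (F := fun r x => Real.log (1 + 2 * r * sphereRe x + r ^ 2))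
      (F' := fun r x => (2 * sphereRe x + 2 * r) / (1 + 2 * r * sphereRe x + r ^ 2) ^ 1)
      isOpen_Ioo hr (fun r hr => Continuous.log (by fun_prop) fun x => (hpos hr x).ne')
      (continuousOn_sphereRe_div 1) (fun r hr x => by
        simpa using (hasDerivAt_one_add_two_mul_add_sq r (sphereRe x)).log (hpos hr x).ne')
    have hD : ∫ x, (2 * sphereRe x + 2 * r) / (1 + 2 * r * sphereRe x + r ^ 2) ^ 1 ∂muH = r := by
      by_cases h0 : r = 0
      · have h := integral_laplacian_identity 0 (by norm_num)
        subst h0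
        simp only [mul_zero, zero_mul, zero_pow two_ne_zero, add_zero, div_one, zero_div,
          integral_const_mul, pow_one] at h ⊢
        linarith
      · have h1 := integral_inv_eq_one hr
        have h2 : r * ∫ x, (2 * sphereRe x + 2 * r) / (1 + 2 * r * sphereRe x + r ^ 2) ^ 1 ∂muH =
            ∫ x, (1 - (1 - r ^ 2) * (1 + 2 * r * sphereRe x + r ^ 2)⁻¹) ∂muH := by
          rw [← integral_const_mul]
          congr 1
          funext x
          rw [pow_one, div_eq_mul_inv]
          linear_combination mul_inv_cancel₀ (hpos hr x).ne'
        rw [integral_sub (integrable_const _)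
          ((integrable_muH (continuous_inv_sphereRe hr)).const_mul _), integral_const_mul, h1] at h2
        simp only [integral_const, probReal_univ, smul_eq_mul] at h2
        exact mul_left_cancel₀ h0 (by linarith)
    have hsq : HasDerivAt (fun r : ℝ => r ^ 2 / 2) r r :=
      ((hasDerivAt_pow 2 r).div_const 2).congr_deriv (by simp)
    exact (hL.sub hsq).congr_deriv (by rw [hD, sub_self])
  have hconst := isOpen_Ioo.is_const_of_deriv_eq_zero isPreconnected_Ioo
    (fun r hr => (key hr).differentiableAt.differentiableWithinAt) (fun r hr => (key hr).deriv)
    hr (show (0 : ℝ) ∈ Set.Ioo (-1 : ℝ) 1 by norm_num)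
  simp at hconst
  linarith

lemma abs_log_le_add_inv {u : ℝ} (hu : 0 < u) : |Real.log u| ≤ u + u⁻¹ := by
  have h1 := Real.log_le_self hu.le
  have h2 := Real.log_le_self (inv_pos.2 hu).le
  rw [Real.log_inv] at h2
  have := inv_pos.2 hu
  exact abs_le.2 ⟨by linarith, by linarith⟩

open Filter Topology in
/-- The limiting case `r = 1` of the mean value of `log |1 + r x| ^ 2`; Fatou's lemma applied to
`|1 + r x|⁻²` provides the dominating function. -/
lemma integral_log_one_add :
    (∀ᵐ x ∂muH, 0 < 1 + 2 * 1 * sphereRe x + 1 ^ 2) ∧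
    Integrable (fun x => Real.log (1 + 2 * 1 * sphereRe x + 1 ^ 2)) muH ∧
    ∫ x, Real.log (1 + 2 * 1 * sphereRe x + 1 ^ 2) ∂muH = 1 ^ 2 / 2 := by
  set u : ℝ → Metric.sphere (0 : ℍ) 1 → ℝ := fun r x => 1 + 2 * r * sphereRe x + r ^ 2 with hu
  change (∀ᵐ x ∂muH, 0 < u 1 x) ∧ Integrable (fun x => Real.log (u 1 x)) muH ∧
    ∫ x, Real.log (u 1 x) ∂muH = 1 ^ 2 / 2
  have huc (r : ℝ) : Continuous (u r) := by simp only [hu]; fun_prop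
  have htl (x) : sphereRe x ∈ Set.Icc (-1 : ℝ) 1 := abs_le.1 (sq_le_one_iff_abs_le_one _ |>.1
    (sphereRe_sq_le_one x))
  set s : ℕ → ℝ := fun n => n / (n + 1) with hs
  have hs_mem (n : ℕ) : s n ∈ Set.Ico (0 : ℝ) 1 :=
    ⟨by positivity, (div_lt_one (by positivity)).2 (by linarith)⟩
  have hs_mem' (n : ℕ) : s n ∈ Set.Ioo (-1 : ℝ) 1 :=
    ⟨by linarith [(hs_mem n).1], (hs_mem n).2⟩
  have hs_lim : Tendsto s atTop (𝓝 1) := tendsto_natCast_div_add_atTop 1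
  have hu_lim (x) : Tendsto (fun n => u (s n) x) atTop (𝓝 (u 1 x)) := by
    have : Continuous fun r => u r x := by simp only [hu]; fun_prop
    exact (this.tendsto 1).comp hs_lim
  have hu_pos (n x) : 0 < u (s n) x :=
    one_add_two_mul_add_sq_pos (hs_mem' n) (sphereRe_sq_le_one x)
  have hfatou : ∫⁻ x, (ENNReal.ofReal (u 1 x))⁻¹ ∂muH ≤ 1 := by
    have h := lintegral_liminf_le (μ := muH) (u := atTop)
      (f := fun n x => (ENNReal.ofReal (u (s n) x))⁻¹) fun n =>
        ((huc (s n)).measurable.ennreal_ofReal).inv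
    have hone (n : ℕ) : ∫⁻ x, (ENNReal.ofReal (u (s n) x))⁻¹ ∂muH = 1 := by
      simp_rw [← ENNReal.ofReal_inv_of_pos (hu_pos n _)]
      rw [← ofReal_integral_eq_lintegral_ofReal
        (integrable_muH (continuous_inv_sphereRe (hs_mem' n)))
        (.of_forall fun x => (inv_pos.2 (hu_pos n x)).le),
        integral_inv_eq_one (hs_mem' n), ENNReal.ofReal_one]
    simp only [hone, liminf_const] at h
    refine le_trans (le_of_eq ?_) h
    congr 1
    funext x
    exact ((ENNReal.continuous_ofReal.tendsto _).comp (hu_lim x)).inv.liminf_eq.symm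
  have hpos : ∀ᵐ x ∂muH, 0 < u 1 x := by
    filter_upwards [ae_lt_top ((huc 1).measurable.ennreal_ofReal).inv
      (hfatou.trans_lt ENNReal.one_lt_top).ne] with x hx
    simpa using hx
  have hinv : Integrable (fun x => (u 1 x)⁻¹) muH := by
    refine ⟨(huc 1).measurable.inv.aestronglyMeasurable, ?_⟩
    rw [hasFiniteIntegral_iff_ofReal (by filter_upwards [hpos] with x hx using (inv_pos.2 hx).le)]
    refine lt_of_le_of_lt (lintegral_mono_ae ?_) (hfatou.trans_lt ENNReal.one_lt_top)
    filter_upwards [hpos] with x hx using (ENNReal.ofReal_inv_of_pos hx).le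
  have hmeas (r : ℝ) : AEStronglyMeasurable (fun x => Real.log (u r x)) muH :=
    (huc r).measurable.log.aestronglyMeasurable
  refine ⟨hpos, ?_, ?_⟩
  · refine ((integrable_muH (huc 1)).add hinv).mono' (hmeas 1) ?_
    filter_upwards [hpos] with x hx using abs_log_le_add_inv hx
  · have hlim := tendsto_integral_of_dominated_convergence (μ := muH)
      (F := fun n x => Real.log (u (s n) x)) (f := fun x => Real.log (u 1 x))
      (fun x => 4 + 4 * (u 1 x)⁻¹) (fun n => hmeas (s n))
      ((integrable_const _).add (hinv.const_mul 4)) (fun n => ?_) ?_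
    · have hval : (fun n => ∫ x, Real.log (u (s n) x) ∂muH) = fun n => s n ^ 2 / 2 :=
        funext fun n => integral_log_eq_of_lt_one (hs_mem' n)
      rw [hval] at hlim
      exact tendsto_nhds_unique hlim ((hs_lim.pow 2).div_const 2)
    · filter_upwards [hpos] with x hx
      refine (abs_log_le_add_inv (hu_pos n x)).trans (add_le_add ?_ ?_)
      · simp only [hu]
        nlinarith [(hs_mem n).1, (hs_mem n).2, (htl x).1, (htl x).2]
      · rw [inv_le_comm₀ (hu_pos n x) (by positivity), mul_inv, inv_inv]
        have h1 := mul_nonneg (neg_le_iff_add_nonneg.1 (htl x).1)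
          (mul_nonneg (hs_mem n).1 (by linarith [(hs_mem n).1] : 0 ≤ 2 + s n))
        have h2 := mul_nonneg (sub_nonneg.2 (htl x).2) (sq_nonneg (1 - s n))
        simp only [hu]
        nlinarith
    · filter_upwards [hpos] with x hx using (hu_lim x).log hx.ne'

lemma integral_log_of_mem_Icc {r : ℝ} (hr : r ∈ Set.Icc (0 : ℝ) 1) :
    (∀ᵐ x ∂muH, 0 < 1 + 2 * r * sphereRe x + r ^ 2) ∧
    Integrable (fun x => Real.log (1 + 2 * r * sphereRe x + r ^ 2)) muH ∧
    ∫ x, Real.log (1 + 2 * r * sphereRe x + r ^ 2) ∂muH = r ^ 2 / 2 := by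
  rcases hr.2.lt_or_eq with h | rfl
  · have hr' : r ∈ Set.Ioo (-1 : ℝ) 1 := ⟨by linarith [hr.1], h⟩
    have hpos (x) := one_add_two_mul_add_sq_pos hr' (sphereRe_sq_le_one x)
    exact ⟨.of_forall hpos, integrable_muH (Continuous.log (by fun_prop) fun x => (hpos x).ne'),
      integral_log_eq_of_lt_one hr'⟩
  · exact integral_log_one_add

lemma integral_log_sq_add {P Q : ℝ} (hP : 0 < P) (hQ : 0 ≤ Q) (hQP : Q ≤ P) :
    Integrable (fun x => Real.log (P ^ 2 + Q ^ 2 + 2 * P * Q * sphereRe x)) muH ∧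
    ∫ x, Real.log (P ^ 2 + Q ^ 2 + 2 * P * Q * sphereRe x) ∂muH =
      2 * Real.log P + Q ^ 2 / (2 * P ^ 2) := by
  obtain ⟨hpos, hint, hval⟩ := integral_log_of_mem_Icc
    (r := Q / P) ⟨by positivity, (div_le_one hP).2 hQP⟩
  have hae : (fun x => 2 * Real.log P + Real.log (1 + 2 * (Q / P) * sphereRe x + (Q / P) ^ 2))
      =ᵐ[muH] fun x => Real.log (P ^ 2 + Q ^ 2 + 2 * P * Q * sphereRe x) := by
    filter_upwards [hpos] with x hx
    have h : P ^ 2 + Q ^ 2 + 2 * P * Q * sphereRe x =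
        P ^ 2 * (1 + 2 * (Q / P) * sphereRe x + (Q / P) ^ 2) := by
      field_simp
      ring
    rw [h, Real.log_mul (by positivity) hx.ne', Real.log_pow]
    norm_num
  refine ⟨((integrable_const _).add hint).congr hae, ?_⟩
  rw [← integral_congr_ae hae, integral_add (integrable_const _) hint, hval]
  simp only [integral_const, probReal_univ, one_smul]
  field_simp

lemma integral_inv_sq_add {P Q : ℝ} (hP : 0 < P) (hQ : 0 ≤ Q) (hQP : Q < P) :
    Integrable (fun x => (P ^ 2 + Q ^ 2 + 2 * P * Q * sphereRe x)⁻¹) muH ∧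
    ∫ x, (P ^ 2 + Q ^ 2 + 2 * P * Q * sphereRe x)⁻¹ ∂muH = (P ^ 2)⁻¹ := by
  have hr : Q / P ∈ Set.Ioo (-1 : ℝ) 1 :=
    ⟨by linarith [div_nonneg hQ hP.le], (div_lt_one hP).2 hQP⟩
  have h : (fun x => (P ^ 2 + Q ^ 2 + 2 * P * Q * sphereRe x)⁻¹) =
      fun x => (P ^ 2)⁻¹ * (1 + 2 * (Q / P) * sphereRe x + (Q / P) ^ 2)⁻¹ := by
    funext x
    rw [← mul_inv]
    congr 1
    field_simp
    ring
  rw [h, integral_const_mul, integral_inv_eq_one hr, mul_one]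
  exact ⟨(integrable_muH (continuous_inv_sphereRe hr)).const_mul _, rfl⟩

lemma exists_norm_add_mul_sq (p q : ℍ) : ∃ w : Metric.sphere (0 : ℍ) 1,
    ∀ x : Metric.sphere (0 : ℍ) 1,
      ‖p + q * x‖ ^ 2 = ‖p‖ ^ 2 + ‖q‖ ^ 2 + 2 * ‖p‖ * ‖q‖ * sphereRe (w * x) := by
  obtain ⟨w, hw⟩ : ∃ w : Metric.sphere (0 : ℍ) 1, star p * q = (‖p‖ * ‖q‖) • (w : ℍ) := by
    by_cases h : star p * q = 0
    · refine ⟨1, ?_⟩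
      rw [h, ← norm_star p, ← norm_mul, h, norm_zero, zero_smul]
    · have h' : ‖p‖ * ‖q‖ = ‖star p * q‖ := by rw [norm_mul, norm_star]
      refine ⟨⟨(‖star p * q‖)⁻¹ • (star p * q), ?_⟩, ?_⟩
      · rw [mem_sphere_zero_iff_norm, norm_smul, norm_inv, norm_norm,
          inv_mul_cancel₀ (norm_ne_zero_iff.2 h)]
      · rw [h', smul_inv_smul₀ (norm_ne_zero_iff.2 h)]
  refine ⟨w, fun x => ?_⟩
  have h1 : (p * star (q * x)).re = ‖p‖ * ‖q‖ * sphereRe (w * x) := by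
    have h0 : ‖p‖ * ‖q‖ * sphereRe (w * x) = (star p * q * x).re := by
      rw [hw, smul_mul_assoc, re_smul, smul_eq_mul, sphereRe, Metric.unitSphere.coe_mul]
    rw [h0]
    simp only [re_mul, imI_mul, imJ_mul, imK_mul, re_star, imI_star, imJ_star, imK_star]
    ring
  have h2 : ‖q * (x : ℍ)‖ = ‖q‖ := by rw [norm_mul, norm_eq_of_mem_sphere x, mul_one]
  rw [sq, ← normSq_eq_norm_mul_self, normSq_add, normSq_eq_norm_mul_self, normSq_eq_norm_mul_self,
    h1, h2]
  ring

lemma log_norm_eq (q : ℍ) : Real.log ‖q‖ = 1 / 2 * Real.log (‖q‖ ^ 2) := by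
  rw [Real.log_pow]
  push_cast
  ring

/-- The mean value of `log |p + q x|` over the unit sphere when `|q| ≤ |p|`. -/
lemma integral_log_norm_of_le {p : ℍ} (q : ℍ) (hp : p ≠ 0) (h : ‖q‖ ≤ ‖p‖) :
    Integrable (fun x : Metric.sphere (0 : ℍ) 1 => Real.log ‖p + q * x‖) muH ∧
    ∫ x : Metric.sphere (0 : ℍ) 1, Real.log ‖p + q * x‖ ∂muH =
      Real.log ‖p‖ + ‖q‖ ^ 2 / (4 * ‖p‖ ^ 2) := by
  obtain ⟨w, hw⟩ := exists_norm_add_mul_sq p q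
  obtain ⟨hint, hval⟩ := integral_log_sq_add (norm_pos_iff.2 hp) (norm_nonneg q) h
  simp only [log_norm_eq (p + q * _), hw]
  refine ⟨(hint.comp_mul_left w).const_mul _, ?_⟩
  rw [integral_const_mul, integral_mul_left_eq_self (μ := muH)
    (fun x => Real.log (‖p‖ ^ 2 + ‖q‖ ^ 2 + 2 * ‖p‖ * ‖q‖ * sphereRe x)) w, hval]
  have := norm_pos_iff.2 hp
  field_simp
  ring

/-- The mean value of `log |p + q x|` over the unit sphere when `|p| ≤ |q|`. -/
lemma integral_log_norm_of_ge (p : ℍ) {q : ℍ} (hq : q ≠ 0) (h : ‖p‖ ≤ ‖q‖) :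
    Integrable (fun x : Metric.sphere (0 : ℍ) 1 => Real.log ‖p + q * x‖) muH ∧
    ∫ x : Metric.sphere (0 : ℍ) 1, Real.log ‖p + q * x‖ ∂muH =
      Real.log ‖q‖ + ‖p‖ ^ 2 / (4 * ‖q‖ ^ 2) := by
  obtain ⟨w, hw⟩ := exists_norm_add_mul_sq p q
  obtain ⟨hint, hval⟩ := integral_log_sq_add (norm_pos_iff.2 hq) (norm_nonneg p) h
  have hw' (x : Metric.sphere (0 : ℍ) 1) :
      ‖p + q * x‖ ^ 2 = ‖q‖ ^ 2 + ‖p‖ ^ 2 + 2 * ‖q‖ * ‖p‖ * sphereRe (w * x) := by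
    rw [hw]; ring
  simp only [log_norm_eq (p + q * _), hw']
  refine ⟨(hint.comp_mul_left w).const_mul _, ?_⟩
  rw [integral_const_mul, integral_mul_left_eq_self (μ := muH)
    (fun x => Real.log (‖q‖ ^ 2 + ‖p‖ ^ 2 + 2 * ‖q‖ * ‖p‖ * sphereRe x)) w, hval]
  have := norm_pos_iff.2 hq
  field_simp
  ring

/-- The mean value of the harmonic function `|p + q x|⁻²` over the unit sphere. -/
lemma integral_inv_norm_sq {p q : ℍ} (h : ‖p‖ ≠ ‖q‖) :
    Integrable (fun x : Metric.sphere (0 : ℍ) 1 => (‖p + q * x‖ ^ 2)⁻¹) muH ∧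
    ∫ x : Metric.sphere (0 : ℍ) 1, (‖p + q * x‖ ^ 2)⁻¹ ∂muH = (max ‖p‖ ‖q‖ ^ 2)⁻¹ := by
  obtain ⟨w, hw⟩ := exists_norm_add_mul_sq p q
  simp only [hw]
  suffices H : Integrable (fun x => (‖p‖ ^ 2 + ‖q‖ ^ 2 + 2 * ‖p‖ * ‖q‖ * sphereRe x)⁻¹) muH ∧
      ∫ x, (‖p‖ ^ 2 + ‖q‖ ^ 2 + 2 * ‖p‖ * ‖q‖ * sphereRe x)⁻¹ ∂muH =
        (max ‖p‖ ‖q‖ ^ 2)⁻¹ by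
    refine ⟨H.1.comp_mul_left w, ?_⟩
    rw [integral_mul_left_eq_self (μ := muH)
      (fun x => (‖p‖ ^ 2 + ‖q‖ ^ 2 + 2 * ‖p‖ * ‖q‖ * sphereRe x)⁻¹) w, H.2]
  rcases h.lt_or_gt with h | h
  · rw [max_eq_right h.le]
    simp only [add_comm (‖p‖ ^ 2), mul_right_comm _ ‖p‖ ‖q‖]
    exact integral_inv_sq_add ((norm_nonneg p).trans_lt h) (norm_nonneg p) h
  · rw [max_eq_left h.le]
    exact integral_inv_sq_add ((norm_nonneg q).trans_lt h) (norm_nonneg q) h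

/-- If `|b|` is at most the distance between `|a|` and `|c|`, integrating first in `y` and then
in `x` evaluates the Mahler measure of `a x + b y + c`. -/
lemma mahlerH2_of_norm_le_abs_sub {a b c : ℍ} (h0 : 0 < max ‖c‖ ‖a‖)
    (hb : ‖b‖ ≤ |‖c‖ - ‖a‖|) :
    mahlerH2 (fun x y => a * x + b * y + c) =
      Real.log (max ‖c‖ ‖a‖) + (‖a‖ ^ 2 + ‖b‖ ^ 2 + ‖c‖ ^ 2) / (4 * max ‖c‖ ‖a‖ ^ 2) - 1 / 4 := by
  have hD (x : Metric.sphere (0 : ℍ) 1) : ‖b‖ ≤ ‖c + a * x‖ := by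
    have h := abs_norm_sub_norm_le c (-(a * (x : ℍ)))
    rw [norm_neg, sub_neg_eq_add, norm_mul, norm_eq_of_mem_sphere x, mul_one] at h
    exact hb.trans h
  have hinner (x : Metric.sphere (0 : ℍ) 1) :
      Integrable (fun y : Metric.sphere (0 : ℍ) 1 => Real.log ‖c + a * x + b * y‖) muH ∧
      ∫ y : Metric.sphere (0 : ℍ) 1, Real.log ‖c + a * x + b * y‖ ∂muH =
        Real.log ‖c + a * x‖ + ‖b‖ ^ 2 / 4 * (‖c + a * x‖ ^ 2)⁻¹ := by
    by_cases hx : c + a * (x : ℍ) = 0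
    · have hb0 : b = 0 := by
        have := hD x
        rwa [hx, norm_zero, norm_le_zero_iff] at this
      simp [hx, hb0]
    · obtain ⟨h1, h2⟩ := integral_log_norm_of_le b hx (hD x)
      refine ⟨h1, h2.trans ?_⟩
      ring
  have hlog : Integrable (fun x : Metric.sphere (0 : ℍ) 1 => Real.log ‖c + a * x‖) muH ∧
      ∫ x : Metric.sphere (0 : ℍ) 1, Real.log ‖c + a * x‖ ∂muH =
        Real.log (max ‖c‖ ‖a‖) + (‖a‖ ^ 2 + ‖c‖ ^ 2) / (4 * max ‖c‖ ‖a‖ ^ 2) - 1 / 4 := by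
    rcases le_total ‖a‖ ‖c‖ with h | h
    · rw [max_eq_left h] at h0 ⊢
      obtain ⟨h1, h2⟩ := integral_log_norm_of_le a (norm_pos_iff.1 h0) h
      refine ⟨h1, h2.trans ?_⟩
      field_simp
      ring
    · rw [max_eq_right h] at h0 ⊢
      obtain ⟨h1, h2⟩ := integral_log_norm_of_ge c (norm_pos_iff.1 h0) h
      refine ⟨h1, h2.trans ?_⟩
      field_simp
      ring
  have hinv : Integrable
        (fun x : Metric.sphere (0 : ℍ) 1 => ‖b‖ ^ 2 / 4 * (‖c + a * x‖ ^ 2)⁻¹) muH ∧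
      ∫ x : Metric.sphere (0 : ℍ) 1, ‖b‖ ^ 2 / 4 * (‖c + a * x‖ ^ 2)⁻¹ ∂muH =
        ‖b‖ ^ 2 / 4 * (max ‖c‖ ‖a‖ ^ 2)⁻¹ := by
    by_cases hb0 : b = 0
    · simp [hb0]
    · have hne : ‖c‖ ≠ ‖a‖ := by
        intro h
        rw [h, sub_self, abs_zero, norm_le_zero_iff] at hb
        exact hb0 hb
      obtain ⟨h1, h2⟩ := integral_inv_norm_sq hne
      exact ⟨h1.const_mul _, by rw [integral_const_mul, h2]⟩
  have hint : Integrable (fun p : Metric.sphere (0 : ℍ) 1 × Metric.sphere (0 : ℍ) 1 =>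
      Real.log ‖c + a * p.1 + b * p.2‖) (muH.prod muH) := by
    have hc : Continuous fun p : Metric.sphere (0 : ℍ) 1 × Metric.sphere (0 : ℍ) 1 =>
        ‖c + a * p.1 + b * p.2‖ := by fun_prop
    have hm := hc.measurable.log.aestronglyMeasurable (μ := muH.prod muH)
    refine (integrable_prod_iff hm).2 ⟨.of_forall fun x => (hinner x).1, ?_⟩
    set K : ℝ := ‖c‖ + ‖a‖ + ‖b‖
    have hK (x y : Metric.sphere (0 : ℍ) 1) : Real.log ‖c + a * x + b * y‖ ≤ K := by
      refine (Real.log_le_self (norm_nonneg _)).trans ((norm_add₃_le).trans_eq ?_)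
      simp only [norm_mul, norm_eq_of_mem_sphere, mul_one, K]
    have hK0 : 0 ≤ K := by positivity
    refine (((integrable_const (2 * K)).sub (hlog.1.add hinv.1))).mono'
      hm.norm.integral_prod_right' (.of_forall fun x => ?_)
    rw [Real.norm_of_nonneg (integral_nonneg fun y => norm_nonneg _)]
    simp only [Pi.sub_apply, Pi.add_apply]
    rw [← (hinner x).2]
    calc ∫ y : Metric.sphere (0 : ℍ) 1, ‖Real.log ‖c + a * x + b * y‖‖ ∂muH
        ≤ ∫ y : Metric.sphere (0 : ℍ) 1, (2 * K - Real.log ‖c + a * x + b * y‖) ∂muH := by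
          refine integral_mono (hinner x).1.norm ((integrable_const _).sub (hinner x).1) fun y => ?_
          have := hK x y
          exact abs_le.2 ⟨by linarith, by linarith⟩
      _ = _ := by rw [integral_sub (integrable_const _) (hinner x).1]; simp
  have hcomm (x y : ℍ) : a * x + b * y + c = c + a * x + b * y := by abel
  simp only [mahlerH2, hcomm]
  rw [integral_prod _ hint]
  simp only [(hinner _).2]
  rw [integral_add hlog.1 hinv.1, hlog.2, hinv.2]
  field_simp
  ring

lemma mahlerH2_swap {f : ℍ → ℍ → ℍ} : mahlerH2 (fun x y => f y x) = mahlerH2 f :=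
  integral_prod_swap (μ := muH) (ν := muH)
    fun p : Metric.sphere (0 : ℍ) 1 × Metric.sphere (0 : ℍ) 1 => Real.log ‖f p.1 p.2‖

end Quaternion

/-- Maillot-type formula for `m_ℍ(ax + by + c)` in the non-triangle case. -/
theorem mahlerH2_linear_no_triangle (a b c : Quaternion ℝ)
    (h0 : ¬(a = 0 ∧ b = 0 ∧ c = 0))
    (htri : ‖b‖ + ‖c‖ ≤ ‖a‖ ∨ ‖a‖ + ‖c‖ ≤ ‖b‖ ∨ ‖a‖ + ‖b‖ ≤ ‖c‖)
    (M : ℝ) (hM : M = max (max ‖a‖ ‖b‖) ‖c‖) :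
    mahlerH2 (fun x y => a * x + b * y + c) =
      Real.log M + (‖a‖ ^ 2 + ‖b‖ ^ 2 + ‖c‖ ^ 2) / (4 * M ^ 2) - 1 / 4 := by
  have hpos : 0 < max (max ‖a‖ ‖b‖) ‖c‖ := by
    by_contra! h
    have ha := (le_max_left ‖a‖ ‖b‖).trans ((le_max_left _ ‖c‖).trans h)
    have hb := (le_max_right ‖a‖ ‖b‖).trans ((le_max_left _ ‖c‖).trans h)
    have hc := (le_max_right _ ‖c‖).trans h
    exact h0 ⟨norm_le_zero_iff.1 ha, norm_le_zero_iff.1 hb, norm_le_zero_iff.1 hc⟩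
  rw [← hM] at hpos
  have hna := norm_nonneg a
  have hnb := norm_nonneg b
  have hnc := norm_nonneg c
  rcases htri with h | h | h
  · have hMa : M = max ‖c‖ ‖a‖ := by
      rw [hM, max_eq_left (by linarith : ‖b‖ ≤ ‖a‖), max_comm]
    rw [hMa] at hpos ⊢
    exact mahlerH2_of_norm_le_abs_sub hpos (le_abs.2 (.inr (by linarith)))
  · have hMb : M = max ‖c‖ ‖b‖ := by
      rw [hM, max_eq_right (by linarith : ‖a‖ ≤ ‖b‖), max_comm]
    rw [hMb] at hpos ⊢
    have key := mahlerH2_of_norm_le_abs_sub (a := b) (b := a) hpos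
      (le_abs.2 (.inr (by linarith)))
    rw [← mahlerH2_swap, add_comm (‖a‖ ^ 2), ← key]
    simp only [add_comm (a * _)]
  · have hMc : M = max ‖c‖ ‖a‖ := by
      rw [hM, max_eq_right (max_le (by linarith) (by linarith) : max ‖a‖ ‖b‖ ≤ ‖c‖),
        max_eq_left (by linarith : ‖a‖ ≤ ‖c‖)]
    rw [hMc] at hpos ⊢
    exact mahlerH2_of_norm_le_abs_sub hpos (le_abs.2 (.inl (by linarith)))
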